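/- If Γ is a USLI complex on [n] and Γ′ is any shifted simplicial complex on [n] with the same f-vector as Γ, then Γ′ = Γ. In other words, a USLI complex is the unique shifted complex with its f-vector. -/

import Mathlib

/-- A simplicial complex on a subset of ℕ: a collection of finite sets closed under inclusion. -/
def IsComplex (Γ : Finset (Finset ℕ)) : Prop :=
  ∀ F ∈ Γ, ∀ G ⊆ F, G ∈ Γ

/-- Γ is shifted on vertex set [n]: replacing a vertex by a larger one stays in Γ. -/
def IsShifted (Γ : Finset (Finset ℕ)) (n : ℕ) : Prop :=
  ∀ F ∈ Γ, ∀ i ∈ F, ∀ j, i < j → j ≤ n → insert j (F.erase i) ∈ Γ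

/-- The facets (maximal faces) of Γ. -/
def facets (Γ : Finset (Finset ℕ)) : Finset (Finset ℕ) :=
  Γ.filter fun F => ∀ G ∈ Γ, F ⊆ G → F = G

/-- The antistar of a vertex. -/
def ast (Γ : Finset (Finset ℕ)) (v : ℕ) : Finset (Finset ℕ) :=
  Γ.filter fun F => v ∉ F

/-- The link of a vertex. -/
def lk (Γ : Finset (Finset ℕ)) (v : ℕ) : Finset (Finset ℕ) :=
  Γ.filter fun F => v ∉ F ∧ insert v F ∈ Γ

/-- The cone over Γ with apex v. -/
def cone (Γ : Finset (Finset ℕ)) (v : ℕ) : Finset (Finset ℕ) :=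
  Γ ∪ Γ.image (insert v)


/-- Monomials in the variables x_i (i ≥ 1) are modelled as multisets of variable indices;
`m ≤ m'` (multiset inclusion) is divisibility.  `monLexGT m m'` says m >_lex m' in the
lexicographic order on monomials of S (smaller variable indices are lex-larger). -/
def monLexGT (m m' : Multiset ℕ) : Prop :=
  List.Lex (· < ·) (m.sort (· ≤ ·)) (m'.sort (· ≤ ·))

/-- m >_grlex m' in the graded lexicographic order (lower degree monomials are larger). -/
def gradedLexGT (m m' : Multiset ℕ) : Prop :=
  Multiset.card m < Multiset.card m' ∨
    (Multiset.card m = Multiset.card m' ∧ monLexGT m m')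

/-- A set of monomials forms a monomial ideal iff it is upward closed under divisibility. -/
def IsMonIdeal (I : Set (Multiset ℕ)) : Prop :=
  ∀ m ∈ I, ∀ m' : Multiset ℕ, m ≤ m' → m' ∈ I

/-- The minimal generators of a monomial ideal: monomials of I not properly divisible by
a monomial of I. -/
def minGen (I : Set (Multiset ℕ)) : Set (Multiset ℕ) :=
  {m ∈ I | ∀ m' ∈ I, m' ≤ m → m' = m}

/-- The monomial ideal generated by a set of monomials. -/
def idealGen (G : Set (Multiset ℕ)) : Set (Multiset ℕ) :=
  {m | ∃ g ∈ G, g ≤ m}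

/-- A universal squarefree lexsegment ideal (USLI): a squarefree monomial ideal of
S = k[x_i : i ∈ ℕ], finitely generated in each degree, such that together with any
monomial it contains every lex-larger squarefree monomial of the same degree. -/
def IsUSLI (L : Set (Multiset ℕ)) : Prop :=
  IsMonIdeal L ∧
  (∀ m ∈ minGen L, m.Nodup ∧ ∀ x ∈ m, 1 ≤ x) ∧
  (∀ d : ℕ, {m ∈ minGen L | Multiset.card m = d}.Finite) ∧
  (∀ m ∈ L, ∀ m' : Multiset ℕ, m'.Nodup → (∀ x ∈ m', 1 ≤ x) →
    Multiset.card m' = Multiset.card m → monLexGT m' m → m' ∈ L)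

/-- A squarefree strongly stable monomial ideal: all minimal generators are squarefree
(in positive variables), and exchanging a variable of a minimal generator for a smaller
missing one stays in the ideal. -/
def IsSqStable (I : Set (Multiset ℕ)) : Prop :=
  IsMonIdeal I ∧
  (∀ m ∈ minGen I, m.Nodup ∧ ∀ x ∈ m, 1 ≤ x) ∧
  (∀ m ∈ minGen I, ∀ i j : ℕ, 1 ≤ i → i < j → j ∈ m → i ∉ m →
    (i ::ₘ m.erase j) ∈ I)

/-- The largest variable index dividing a monomial. -/
def maxVar (u : Multiset ℕ) : ℕ := u.toFinset.sup id

/-!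
Finite generation in each degree means that a USLI `L` contains a monomial as soon as it contains
infinitely many of its multiples by a single variable. If `L` contained a monomial of degree `d`
in variables beyond `x_v`, it would contain every lex-larger squarefree `x_v x_G` of degree `d`, and
hence `x_v` itself. So for the least element `v` of the ground set, either `v` is not a vertex of
the USLI complex `Γ`, or its antistar is a full simplex.

The `f`-vector tells which case holds for a shifted complex `Γ'`: if `v` is a vertex of `Γ'`, then
so is every element of the ground set, and a face of `Γ'` with as many elements as there are beyond
`v` can be shifted to the set of all of these. Thus either `v` can be discarded, or the antistars of
`v` agree; then its links have equal `f`-vectors, and the argument recurses into the links.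
-/

section Complexes

open Finset
open scoped FinsetFamily

variable {Γ Γ' : Finset (Finset ℕ)} {F : Finset ℕ} {v n : ℕ}

theorem subset_Ioc_iff_subset_Icc : F ⊆ Ioc v n ↔ F ⊆ Icc v n ∧ v ∉ F := by
  rw [← Icc_erase_left, subset_erase]

theorem IsComplex.mem_lk (hΓ : IsComplex Γ) : F ∈ lk Γ v ↔ insert v F ∈ Γ ∧ v ∉ F := by
  simp only [lk, mem_filter]
  exact ⟨fun h => ⟨h.2.2, h.2.1⟩, fun h => ⟨hΓ _ h.1 _ (subset_insert v F), h.2, h.1⟩⟩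

protected theorem IsComplex.lk (hΓ : IsComplex Γ) : IsComplex (lk Γ v) := fun F hF G hGF => by
  rw [hΓ.mem_lk] at hF ⊢
  exact ⟨hΓ _ hF.1 _ (insert_subset_insert v hGF), fun hv => hF.2 (hGF hv)⟩

theorem IsComplex.card_slice_succ (hΓ : IsComplex Γ) (v c : ℕ) :
    #(Γ # (c + 1)) = #((lk Γ v) # c) + #((ast Γ v) # (c + 1)) := by
  have hlk : (Γ # (c + 1)).memberSubfamily v = (lk Γ v) # c := by
    ext F
    simp only [mem_memberSubfamily, mem_slice, hΓ.mem_lk]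
    grind
  have hast : (Γ # (c + 1)).nonMemberSubfamily v = (ast Γ v) # (c + 1) := filter_comm _ _ _
  rw [← card_memberSubfamily_add_card_nonMemberSubfamily v, hlk, hast]

theorem IsComplex.eq_of_lk_eq_of_ast_eq (hΓ : IsComplex Γ) (hΓ' : IsComplex Γ')
    (hlk : lk Γ v = lk Γ' v) (hast : ast Γ v = ast Γ' v) : Γ = Γ' := by
  ext F
  by_cases hv : v ∈ F
  · simpa [hΓ.mem_lk, hΓ'.mem_lk, insert_erase hv] using congr(F.erase v ∈ $hlk)
  · simpa [ast, hv] using congr(F ∈ $hast)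

theorem IsComplex.lk_subset_powerset (hΓ : IsComplex Γ) (hV : Γ ⊆ (Icc v n).powerset) :
    lk Γ v ⊆ (Ioc v n).powerset := fun F hF => by
  rw [hΓ.mem_lk] at hF
  exact mem_powerset.2 (subset_Ioc_iff_subset_Icc.2
    ⟨(subset_insert v F).trans (mem_powerset.1 (hV hF.1)), hF.2⟩)

theorem IsComplex.subset_powerset_Ioc (hΓ : IsComplex Γ) (hV : Γ ⊆ (Icc v n).powerset)
    (hv : {v} ∉ Γ) : Γ ⊆ (Ioc v n).powerset := fun F hF =>
  mem_powerset.2 (subset_Ioc_iff_subset_Icc.2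
    ⟨mem_powerset.1 (hV hF), fun hvF => hv (hΓ F hF _ (singleton_subset_iff.2 hvF))⟩)

theorem IsComplex.ast_eq_powerset (hΓ : IsComplex Γ) (hV : Γ ⊆ (Icc v n).powerset)
    (htop : Ioc v n ∈ Γ) : ast Γ v = (Ioc v n).powerset := by
  ext F
  simp only [ast, mem_filter, mem_powerset]
  exact ⟨fun ⟨hF, hv⟩ => subset_Ioc_iff_subset_Icc.2 ⟨mem_powerset.1 (hV hF), hv⟩,
    fun hF => ⟨hΓ _ htop F hF, (subset_Ioc_iff_subset_Icc.1 hF).2⟩⟩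

protected theorem IsShifted.lk (hsh : IsShifted Γ n) (hΓ : IsComplex Γ)
    (hV : Γ ⊆ (Icc v n).powerset) : IsShifted (lk Γ v) n := fun F hF i hi j hij hjn => by
  have hvi : v < i := (mem_Ioc.1 (mem_powerset.1 (hΓ.lk_subset_powerset hV hF) hi)).1
  rw [hΓ.mem_lk] at hF ⊢
  have hshift := hsh _ hF.1 i (mem_insert_of_mem hi) j hij hjn
  rw [erase_insert_of_ne hvi.ne, insert_comm] at hshift
  exact ⟨hshift, by grind⟩

theorem IsShifted.singleton_mem (hsh : IsShifted Γ n) (hv : {v} ∈ Γ) {j : ℕ}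
    (hj : j ∈ Icc v n) : {j} ∈ Γ := by
  obtain ⟨hvj, hjn⟩ := mem_Icc.1 hj
  obtain rfl | hlt := hvj.eq_or_lt
  · exact hv
  · simpa using hsh {v} hv v (mem_singleton_self v) j hlt hjn

theorem IsShifted.Ioc_mem (hsh : IsShifted Γ n) (hF : F ∈ Γ) (hV : F ⊆ Icc v n)
    (hcard : #F = n - v) : Ioc v n ∈ Γ := by
  have hIoc : #(Ioc v n) = #F := by rw [Nat.card_Ioc, hcard]
  -- If `v ∈ F`, then `F` misses exactly one `j ∈ Ioc v n`, and `v` can be shifted to `j`.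
  by_cases hv : v ∈ F
  · obtain ⟨j, hj, hjF⟩ : ∃ j ∈ Ioc v n, j ∉ F := by
      by_contra! hsub
      exact left_notMem_Ioc (eq_of_subset_of_card_le hsub hIoc.ge ▸ hv)
    have hshift := hsh F hF v hv j (mem_Ioc.1 hj).1 (mem_Ioc.1 hj).2
    have hsub : insert j (F.erase v) ⊆ Ioc v n := insert_subset hj
      (subset_Ioc_iff_subset_Icc.2 ⟨(erase_subset v F).trans hV, notMem_erase v F⟩)
    have hle : #(Ioc v n) ≤ #(insert j (F.erase v)) := by
      rw [card_insert_of_notMem (fun h => hjF (mem_of_mem_erase h)), card_erase_add_one hv, hIoc]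
    rwa [eq_of_subset_of_card_le hsub hle] at hshift
  · have hsub : F ⊆ Ioc v n := subset_Ioc_iff_subset_Icc.2 ⟨hV, hv⟩
    rwa [eq_of_subset_of_card_le hsub hIoc.le] at hF

theorem IsShifted.Ioc_mem_of_card_slice_eq (hsh : IsShifted Γ' n)
    (hV : Γ' ⊆ (Icc v n).powerset) (hcard : #(Γ' # (n - v)) = #(Γ # (n - v)))
    (htop : Ioc v n ∈ Γ) : Ioc v n ∈ Γ' := by
  have hpos : 0 < #(Γ' # (n - v)) := by
    rw [hcard]
    exact card_pos.2 ⟨_, mem_slice.2 ⟨htop, Nat.card_Ioc v n⟩⟩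
  obtain ⟨F, hF⟩ := card_pos.1 hpos
  obtain ⟨hFΓ', hFcard⟩ := mem_slice.1 hF
  exact hsh.Ioc_mem hFΓ' (mem_powerset.1 (hV hFΓ')) hFcard

theorem IsShifted.singleton_mem_of_card_slice_eq (hsh : IsShifted Γ' n)
    (hV : Γ ⊆ (Icc v n).powerset) (hcard : #(Γ' # 1) = #(Γ # 1)) (hv : {v} ∈ Γ') :
    {v} ∈ Γ := by
  have hsub : Γ # 1 ⊆ Γ' # 1 := fun F hF => by
    obtain ⟨hFΓ, hF1⟩ := mem_slice.1 hF
    obtain ⟨j, rfl⟩ := card_eq_one.1 hF1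
    exact mem_slice.2
      ⟨hsh.singleton_mem hv (singleton_subset_iff.1 (mem_powerset.1 (hV hFΓ))), hF1⟩
  have hmem : {v} ∈ Γ' # 1 := mem_slice.2 ⟨hv, card_singleton v⟩
  rw [← eq_of_subset_of_card_le hsub hcard.le] at hmem
  exact (mem_slice.1 hmem).1

theorem eq_of_card_slice_zero_eq (hΓ : Γ ⊆ {∅}) (hΓ' : Γ' ⊆ {∅})
    (hcard : #(Γ' # 0) = #(Γ # 0)) : Γ' = Γ := by
  rcases subset_singleton_iff.1 hΓ with rfl | rfl <;>
    rcases subset_singleton_iff.1 hΓ' with rfl | rfl <;> simp_all [slice, filter_singleton]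

/-- The combinatorial trace on `Γ` of its Stanley–Reisner ideal being a USLI: whenever `A ∪ {v}` is
a face with `A` before `v`, so is `A` together with all the vertices in `[n]` after `v`. -/
def HasFullTails (Γ : Finset (Finset ℕ)) (n : ℕ) : Prop :=
  ∀ (A : Finset ℕ) (v : ℕ), (∀ x ∈ A, x < v) → insert v A ∈ Γ → A ∪ Ioc v n ∈ Γ

theorem HasFullTails.Ioc_mem (hfull : HasFullTails Γ n) (hv : {v} ∈ Γ) : Ioc v n ∈ Γ := by
  simpa using hfull ∅ v (by simp) (by simpa using hv)

protected theorem HasFullTails.lk (hfull : HasFullTails Γ n) (hΓ : IsComplex Γ)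
    (hV : Γ ⊆ (Icc v n).powerset) : HasFullTails (lk Γ v) n := fun A w hA hw => by
  have hvw : v < w :=
    (mem_Ioc.1 (mem_powerset.1 (hΓ.lk_subset_powerset hV hw) (mem_insert_self w A))).1
  rw [hΓ.mem_lk] at hw ⊢
  rw [insert_comm] at hw
  have htail := hfull (insert v A) w (forall_mem_insert _ _ _ |>.2 ⟨hvw, hA⟩) hw.1
  rw [insert_union] at htail
  refine ⟨htail, ?_⟩
  simp only [mem_insert, mem_union, mem_Ioc] at hw ⊢
  grind

theorem HasFullTails.eq_of_card_slice_eq (hfull : HasFullTails Γ n) (hΓ : IsComplex Γ)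
    (hV : Γ ⊆ (Icc v n).powerset) (hsh : IsShifted Γ' n) (hΓ' : IsComplex Γ')
    (hV' : Γ' ⊆ (Icc v n).powerset) (hcard : ∀ c, #(Γ' # c) = #(Γ # c)) : Γ' = Γ := by
  induction hk : n + 1 - v generalizing v Γ Γ' with
  | zero =>
    rw [Icc_eq_empty (by lia), powerset_empty] at hV hV'
    exact eq_of_card_slice_zero_eq hV hV' (hcard 0)
  | succ k ih =>
    have hIoc : Ioc v n = Icc (v + 1) n := (Icc_succ_left_eq_Ioc v n).symm
    by_cases hv : {v} ∈ Γ
    · have hast : ast Γ' v = ast Γ v := by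
        have htop := hfull.Ioc_mem hv
        rw [hΓ.ast_eq_powerset hV htop, hΓ'.ast_eq_powerset hV'
          (hsh.Ioc_mem_of_card_slice_eq hV' (hcard _) htop)]
      have hlk_card (c : ℕ) : #((lk Γ' v) # c) = #((lk Γ v) # c) := by
        have hc := hcard (c + 1)
        rwa [hΓ.card_slice_succ v, hΓ'.card_slice_succ v, hast, Nat.add_right_cancel_iff] at hc
      have hlk : lk Γ' v = lk Γ v :=
        ih (hfull.lk hΓ hV) hΓ.lk (hIoc ▸ hΓ.lk_subset_powerset hV) (hsh.lk hΓ' hV') hΓ'.lk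
          (hIoc ▸ hΓ'.lk_subset_powerset hV') hlk_card (by lia)
      exact hΓ'.eq_of_lk_eq_of_ast_eq hΓ hlk hast
    · have hv' : {v} ∉ Γ' := mt (hsh.singleton_mem_of_card_slice_eq hV (hcard 1)) hv
      exact ih hfull hΓ (hIoc ▸ hΓ.subset_powerset_Ioc hV hv) hsh hΓ'
        (hIoc ▸ hΓ'.subset_powerset_Ioc hV' hv') hcard (by lia)

end Complexes

section Ideals

variable {L : Set (Multiset ℕ)}

theorem exists_mem_minGen_le {m : Multiset ℕ} (hm : m ∈ L) : ∃ g ∈ minGen L, g ≤ m := by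
  obtain ⟨g, hgm, hg⟩ := exists_minimal_le_of_wellFoundedLT (· ∈ L) m hm
  exact ⟨g, ⟨hg.prop, fun m' hm' hle => hg.eq_of_le hm' hle⟩, hgm⟩

theorem IsMonIdeal.mem_of_infinite_cons_mem (hL : IsMonIdeal L)
    (hfin : ∀ d : ℕ, {m ∈ minGen L | Multiset.card m = d}.Finite) {m : Multiset ℕ}
    (hm : {k | k ::ₘ m ∈ L}.Infinite) : m ∈ L := by
  let gens := {g ∈ minGen L | Multiset.card g ≤ Multiset.card m + 1}
  have hgens : gens.Finite :=
    ((Set.finite_Iic (Multiset.card m + 1)).biUnion fun d _ => hfin d).subset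
      fun g hg => Set.mem_biUnion hg.2 ⟨hg.1, rfl⟩
  have hvars : (⋃ g ∈ gens, {x | x ∈ g}).Finite :=
    hgens.biUnion fun g _ => g.finite_toSet
  -- A generator dividing `k ::ₘ m` cannot involve a variable `k` outside `hvars`, so divides `m`.
  obtain ⟨k, hk, hk_vars⟩ := hm.exists_notMem_finite hvars
  obtain ⟨g, hg, hgk⟩ := exists_mem_minGen_le hk
  have hkg : k ∉ g := fun hkg =>
    hk_vars (Set.mem_biUnion ⟨hg, by simpa using Multiset.card_le_card hgk⟩ hkg)
  exact hL g hg.1 m ((Multiset.le_cons_of_notMem hkg).1 hgk)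

theorem IsMonIdeal.mem_of_forall_add_mem (hL : IsMonIdeal L)
    (hfin : ∀ d : ℕ, {m ∈ minGen L | Multiset.card m = d}.Finite) {m : Multiset ℕ} {v e : ℕ}
    (hm : ∀ G : Finset ℕ, (∀ x ∈ G, v < x) → G.card = e → m + G.val ∈ L) : m ∈ L := by
  induction e with
  | zero => simpa using hm ∅ (by simp) rfl
  | succ e ih =>
    refine ih fun G hG hcard => hL.mem_of_infinite_cons_mem hfin ?_
    refine ((Set.Ioi_infinite v).sdiff G.finite_toSet).mono ?_
    rintro k ⟨hvk, hkG⟩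
    have hmem := hm (insert k G) (Finset.forall_mem_insert _ _ _ |>.2 ⟨hvk, hG⟩)
      (by rw [Finset.card_insert_of_notMem hkG, hcard])
    rwa [Finset.insert_val_of_notMem hkG, Multiset.add_cons] at hmem

theorem sort_add_eq_append {α : Type*} [LinearOrder α] {s t : Multiset α}
    (h : ∀ x ∈ s, ∀ y ∈ t, x ≤ y) : (s + t).sort = s.sort ++ t.sort := by
  refine List.Perm.eq_of_pairwise' (r := (· ≤ ·)) (Multiset.pairwise_sort _ _) ?_ ?_
  · exact List.pairwise_append.2 ⟨Multiset.pairwise_sort _ _, Multiset.pairwise_sort _ _,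
      fun x hx y hy => h x ((Multiset.mem_sort _).1 hx) y ((Multiset.mem_sort _).1 hy)⟩
  · rw [← Multiset.coe_eq_coe, ← Multiset.coe_add]
    simp only [Multiset.sort_eq]

theorem monLexGT_add_cons_add {s t u : Multiset ℕ} {v : ℕ} (hs : ∀ x ∈ s, x ≤ v)
    (ht : ∀ x ∈ t, v < x) (ht₀ : t ≠ 0) (hu : ∀ x ∈ u, v ≤ x) :
    monLexGT (s + v ::ₘ u) (s + t) := by
  have hvu : ∀ y ∈ v ::ₘ u, v ≤ y := Multiset.forall_mem_cons.2 ⟨le_rfl, hu⟩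
  rw [monLexGT, sort_add_eq_append fun x hx y hy => (hs x hx).trans (hvu y hy),
    sort_add_eq_append fun x hx y hy => (hs x hx).trans (ht y hy).le, Multiset.sort_cons v u _ hu]
  apply List.Lex.append_left
  obtain ⟨y, l, hyl⟩ : ∃ y l, t.sort (· ≤ ·) = y :: l :=
    List.exists_cons_of_ne_nil fun hnil => ht₀ (by rw [← t.sort_eq (· ≤ ·), hnil]; rfl)
  rw [hyl]
  exact List.Lex.rel (ht y ((Multiset.mem_sort _).1 (hyl ▸ List.mem_cons_self)))

theorem IsUSLI.cons_mem_of_add_mem (hL : IsUSLI L) {s t : Multiset ℕ} {v : ℕ} (hnd : s.Nodup)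
    (hpos : ∀ x ∈ v ::ₘ s, 1 ≤ x) (hs : ∀ x ∈ s, x < v) (ht : ∀ x ∈ t, v < x)
    (hmem : s + t ∈ L) : v ::ₘ s ∈ L := by
  obtain ⟨hmon, -, hfin, hlex⟩ := hL
  obtain rfl | ht₀ := eq_or_ne t 0
  · exact hmon s (by simpa using hmem) _ (Multiset.le_cons_self s v)
  refine hmon.mem_of_forall_add_mem hfin (v := v) (e := Multiset.card t - 1) fun G hG hcard => ?_
  have hgt : monLexGT (v ::ₘ s + G.val) (s + t) := by
    rw [Multiset.cons_add, ← Multiset.add_cons]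
    exact monLexGT_add_cons_add (fun x hx => (hs x hx).le) ht ht₀ fun x hx => (hG x hx).le
  refine hlex _ hmem _ ?_ ?_ ?_ hgt
  · have hvG : ∀ x ∈ v ::ₘ s, x ∉ G := Multiset.forall_mem_cons.2
      ⟨fun hv => (hG v hv).false, fun x hx hxG => (hs x hx).not_gt (hG x hxG)⟩
    exact Multiset.nodup_add.2 ⟨Multiset.nodup_cons.2 ⟨fun hv => (hs v hv).false, hnd⟩,
      G.nodup, Multiset.disjoint_left.2 (hvG _)⟩
  · intro x hx
    exact (Multiset.mem_add.1 hx).elim (hpos x) fun hxG => (Nat.zero_le v).trans_lt (hG x hxG)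
  · have hcard_pos := Multiset.card_pos.2 ht₀
    rw [Multiset.card_add, Multiset.card_add, Multiset.card_cons, Finset.card_val, hcard]
    lia

end Ideals

section StanleyReisner

open Finset

variable {L : Set (Multiset ℕ)} {Γ : Finset (Finset ℕ)} {n : ℕ}

theorem IsMonIdeal.isComplex (hL : IsMonIdeal L) (hV : ∀ F ∈ Γ, F ⊆ Icc 1 n)
    (hΓL : ∀ F ⊆ Icc 1 n, (F ∈ Γ ↔ F.val ∉ L)) : IsComplex Γ := fun F hF G hGF => by
  rw [hΓL G (hGF.trans (hV F hF))]
  exact fun hG => (hΓL F (hV F hF)).1 hF (hL _ hG _ (val_le_iff.2 hGF))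

theorem IsUSLI.hasFullTails (hL : IsUSLI L) (hV : ∀ F ∈ Γ, F ⊆ Icc 1 n)
    (hΓL : ∀ F ⊆ Icc 1 n, (F ∈ Γ ↔ F.val ∉ L)) : HasFullTails Γ n := fun A v hA hvA => by
  have hvA_sub := hV _ hvA
  have hvA_notMem := (hΓL _ hvA_sub).1 hvA
  rw [insert_val_of_notMem fun hv => (hA v hv).false] at hvA_notMem
  have hpos : ∀ x ∈ v ::ₘ A.val, 1 ≤ x := fun x hx =>
    (mem_Icc.1 (hvA_sub (by simpa using hx))).1
  have hsub : A ∪ Ioc v n ⊆ Icc 1 n := union_subset ((subset_insert v A).trans hvA_sub)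
    fun x hx => mem_Icc.2 ⟨(Nat.zero_le v).trans_lt (mem_Ioc.1 hx).1, (mem_Ioc.1 hx).2⟩
  have hdisj : Disjoint A (Ioc v n) :=
    disjoint_left.2 fun x hx hx' => (hA x hx).not_gt (mem_Ioc.1 hx').1
  rw [hΓL _ hsub, ← disjUnion_eq_union A _ hdisj]
  exact mt (hL.cons_mem_of_add_mem A.nodup hpos hA fun x hx => (mem_Ioc.1 hx).1) hvA_notMem

end StanleyReisner

/-- a USLI complex is the unique shifted complex with its f-vector:
if Γ is a complex on [n] whose Stanley-Reisner ideal is a USLI L, and Γ' is a shifted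
complex on [n] with the same f-vector, then Γ' = Γ. -/
theorem usli_complex_unique_in_f_class (n : ℕ) (L : Set (Multiset ℕ)) (hL : IsUSLI L)
    (Γ : Finset (Finset ℕ)) (hΓV : ∀ F ∈ Γ, F ⊆ Finset.Icc 1 n)
    (hΓL : ∀ F : Finset ℕ, F ⊆ Finset.Icc 1 n → (F ∈ Γ ↔ (F.val : Multiset ℕ) ∉ L))
    (Γ' : Finset (Finset ℕ)) (hcx' : IsComplex Γ')
    (hV' : ∀ F ∈ Γ', F ⊆ Finset.Icc 1 n) (hsh' : IsShifted Γ' n)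
    (hfv : ∀ c : ℕ, (Γ'.filter fun F => F.card = c).card = (Γ.filter fun F => F.card = c).card) :
    Γ' = Γ :=
  (hL.hasFullTails hΓV hΓL).eq_of_card_slice_eq (hL.1.isComplex hΓV hΓL)
    (fun F hF => Finset.mem_powerset.2 (hΓV F hF)) hsh' hcx'
    (fun F hF => Finset.mem_powerset.2 (hV' F hF)) hfv
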